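/- Let a, b ∈ k with a, b ∉ {2, −2}, a ∉ {0, 6, −6}, and a² ≠ −12 (so that Aut(H_a) ≅ Q₈). There exist u, λ ∈ k with u ≠ 0, λ ≠ 0 and ε ∈ {1, −1} such that λ²·f_b(X) = Σ_{j=0}^{9} cⱼ·εʲ·(X+u)ʲ·(X−u)^{10−j} in k[X] (where cⱼ is the coefficient of Xʲ in f_a, i.e. λ²·f_b(x) = (x−u)¹⁰·f_a(ε(x+u)/(x−u))), if and only if b = −2 + 16/(a+2) or b = 2 − 16/(a+2). -/

import Mathlib

/-!
Since `f a = X⁹ + a X⁷ - a X³ - X` is odd, `ε = ±1` only contributes an overall factor `ε`.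
With `A = (X + u)²` and `B = (X - u)²` the transformed polynomial is
`ε (X² - u²) (A² - B²) (A² + B² + a A B)`; since `A - B = 4 u X`, `A + B = 2 (X² + u²)` and
`A B = (X² - u²)²`, it equals
`8 ε u X (X⁴ - u⁴) ((a + 2) X⁴ + (12 - 2 a) u² X² + (a + 2) u⁴)`.

Comparing with `λ² f b` in degrees 9, 7 and 3 gives `λ² = 8 ε u (a + 2)`,
`(a + 2) b = (12 - 2 a) u²` and `b = u⁴ b`. As `a ≠ 6` forces `b ≠ 0`, we get `u² = ±1`, hence
`b = ± (12 - 2 a) / (a + 2) = ± (-2 + 16 / (a + 2))`. Conversely, take `u = 1` or `u² = -1`, and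
for `λ` a square root of `8 u (a + 2)`.
-/

open Polynomial

/-- The polynomial `f_a = X (X⁴ − 1)(X⁴ + a X² + 1)` over a field `k`. -/
noncomputable def f {k : Type*} [Field k] (a : k) : k[X] :=
  X * (X ^ 4 - 1) * (X ^ 4 + C a * X ^ 2 + 1)

lemma f_expand {k : Type*} [Field k] (a : k) :
    f a = C 1 * X ^ 9 + C a * X ^ 7 + C (-a) * X ^ 3 + C (-1) * X ^ 1 := by
  simp only [f, map_neg, map_one]
  ring

lemma sum_transform {k : Type*} [Field k] (a u ε : k) (hε : ε = 1 ∨ ε = -1) :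
    ∑ j ∈ Finset.range 10,
        C ((f a).coeff j * ε ^ j) * (X + C u) ^ j * (X - C u) ^ (10 - j) =
      C (8 * ε * u * (a + 2)) * X ^ 9 + C (8 * ε * u * (12 - 2 * a) * u ^ 2) * X ^ 7 +
        C (-(8 * ε * u * (12 - 2 * a) * u ^ 6)) * X ^ 3 +
        C (-(8 * ε * u * (a + 2) * u ^ 8)) * X ^ 1 := by
  rw [f_expand]
  simp only [Finset.sum_range_succ, Finset.sum_range_zero, coeff_add, coeff_C_mul_X_pow]
  rcases hε with rfl | rfl <;>
  · norm_num
    simp only [C_ofNat]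
    ring

theorem stmt_14 (p : ℕ) (hp : p.Prime) (hp7 : 7 ≤ p)
    (k : Type*) [Field k] [IsAlgClosed k] [CharP k p]
    (a b : k) (ha2 : a ∉ ({2, -2} : Set k)) (hb2 : b ∉ ({2, -2} : Set k))
    (ha : a ∉ ({0, 6, -6} : Set k)) (ha12 : a ^ 2 ≠ -12) :
    (∃ u lam ε : k, u ≠ 0 ∧ lam ≠ 0 ∧ ε ∈ ({1, -1} : Set k) ∧
      C (lam ^ 2) * f b =
        ∑ j ∈ Finset.range 10,
          C ((f a).coeff j * ε ^ j) * (X + C u) ^ j * (X - C u) ^ (10 - j)) ↔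
    (b = -2 + 16 / (a + 2) ∨ b = 2 - 16 / (a + 2)) := by
  have h2 : (2 : k) ≠ 0 := by
    intro h
    have h' : p ∣ 2 := (CharP.cast_eq_zero_iff k p 2).mp (by exact_mod_cast h)
    have := Nat.le_of_dvd (by norm_num) h'
    omega
  simp only [Set.mem_insert_iff, Set.mem_singleton_iff, not_or] at ha2 ha
  have ha' : a + 2 ≠ 0 := fun h => ha2.2 (eq_neg_of_add_eq_zero_left h)
  have h8 : (8 : k) ≠ 0 := by
    have : (8 : k) = 2 ^ 3 := by norm_num
    rw [this]; exact pow_ne_zero _ h2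
  constructor
  · rintro ⟨u, lam, ε, hu, hl, hε, h⟩
    simp only [Set.mem_insert_iff, Set.mem_singleton_iff] at hε
    rw [sum_transform a u ε hε, f_expand] at h
    have e9 := congrArg (fun q : k[X] => q.coeff 9) h
    have e7 := congrArg (fun q : k[X] => q.coeff 7) h
    have e3 := congrArg (fun q : k[X] => q.coeff 3) h
    simp only [coeff_add, coeff_C_mul, coeff_X_pow] at e9 e7 e3
    norm_num at e9 e7 e3
    have hl2 : lam ^ 2 ≠ 0 := pow_ne_zero _ hl
    have hε0 : ε ≠ 0 := by rcases hε with rfl | rfl <;> simp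
    have hc : 8 * ε * u ≠ 0 := mul_ne_zero (mul_ne_zero h8 hε0) hu
    have hb : (a + 2) * b = (12 - 2 * a) * u ^ 2 := by
      apply mul_left_cancel₀ hc
      linear_combination e7 - b * e9
    have hb0 : b ≠ 0 := by
      rintro rfl
      have h1 : 2 * (6 - a) * u ^ 2 = 0 := by linear_combination -hb
      have h6 : 6 - a ≠ 0 := fun h => ha.2.1 (sub_eq_zero.mp h).symm
      exact mul_ne_zero (mul_ne_zero h2 h6) (pow_ne_zero _ hu) h1
    have hu4 : (u ^ 2 - 1) * (u ^ 2 + 1) = 0 := by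
      apply mul_left_cancel₀ (mul_ne_zero hl2 hb0)
      linear_combination u ^ 4 * e7 - e3
    rcases mul_eq_zero.mp hu4 with h | h
    · left
      field_simp
      linear_combination hb + (12 - 2 * a) * h
    · right
      field_simp
      linear_combination hb + (12 - 2 * a) * h
  · intro h
    -- `u` is a square root of `±1`, with the sign of `b = ± (12 - 2 a) / (a + 2)`.
    obtain ⟨u, hu4, hb⟩ : ∃ u : k, u ^ 4 = 1 ∧ (a + 2) * b = (12 - 2 * a) * u ^ 2 := by
      rcases h with rfl | rfl
      · refine ⟨1, by norm_num, ?_⟩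
        field_simp
        ring
      · obtain ⟨i, hi⟩ := IsAlgClosed.exists_pow_nat_eq (-1 : k) (n := 2) (by norm_num)
        refine ⟨i, by linear_combination (i ^ 2 - 1) * hi, ?_⟩
        rw [hi]
        field_simp
        ring
    have hu : u ≠ 0 := by
      rintro rfl
      norm_num at hu4
    obtain ⟨l, hl⟩ := IsAlgClosed.exists_pow_nat_eq (8 * u * (a + 2)) (n := 2) (by norm_num)
    refine ⟨u, l, 1, hu, ?_, by simp, ?_⟩
    · rintro rfl
      exact mul_ne_zero (mul_ne_zero h8 hu) ha' (by rw [← hl]; norm_num)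
    · have e7 : 8 * 1 * u * (12 - 2 * a) * u ^ 2 = l ^ 2 * b := by
        linear_combination -8 * u * hb - b * hl
      have e3 : 8 * 1 * u * (12 - 2 * a) * u ^ 6 = l ^ 2 * b := by
        linear_combination e7 + 8 * u * (12 - 2 * a) * u ^ 2 * hu4
      have e1 : 8 * 1 * u * (a + 2) * u ^ 8 = l ^ 2 := by
        linear_combination -hl + 8 * u * (a + 2) * (u ^ 4 + 1) * hu4
      have e9 : 8 * 1 * u * (a + 2) = l ^ 2 := by linear_combination -hl
      rw [sum_transform a u 1 (Or.inl rfl), f_expand, e7, e3, e1, e9]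
      simp only [map_neg, map_mul, map_one]
      ring
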